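/- Let X_1, X_2 be i.i.d. random vectors in ℝ^d with law ν_1 having finite second moments and finite Poincaré constant, and let ν_2 be the law of the standardized sum (X_1 + X_2)/√2. Then, with σ² := σ²(ν_2) = σ²(ν_1), C_p(ν_2) ≤ C_p(ν_1) − (C_p(ν_1)/4) · (C_p(ν_2) − σ²)² / ((C_p(ν_2) − σ²)² + C_p(ν_2) σ²). -/

import Mathlib

open MeasureTheory ProbabilityTheory ENNReal
open scoped RealInnerProductSpace

/-- The Poincaré constant of a Borel probability measure on `ℝ^d`: the smallest constant `C`
such that `Var_μ(f) ≤ C ∫ |∇f|² dμ` for all locally Lipschitz `f : ℝ^d → ℝ`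
(`+∞` if no finite constant works). -/
noncomputable def poincareConst {d : ℕ} (μ : Measure (EuclideanSpace ℝ (Fin d))) : ℝ≥0∞ :=
  sInf {C : ℝ≥0∞ | ∀ f : EuclideanSpace ℝ (Fin d) → ℝ, LocallyLipschitz f →
    evariance f μ ≤ C * ∫⁻ x, ‖gradient f x‖₊ ^ 2 ∂μ}

/-- `σ²(μ) := max_{|α| = 1} Var_μ(x ↦ α·x)`, the largest variance of `μ` in any direction. -/
noncomputable def maxDirVar {d : ℕ} (μ : Measure (EuclideanSpace ℝ (Fin d))) : ℝ :=
  ⨆ α : {a : EuclideanSpace ℝ (Fin d) // ‖a‖ = 1},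
    variance (fun x => ⟪(α : EuclideanSpace ℝ (Fin d)), x⟫) μ

/-!
Write `C` for the Poincaré constant of `ν₁`. For independent `X₁, X₂, X₂'` of law `ν₁` and a real
weight `c`, apply the Poincaré inequality of `ν₁` to the slice `x ↦ f (x + X₂) + c * f (x + X₂')`
and take expectations. At `c = 1` the left side is `2 Var f(X₁ + X₂)`, and the right side involves
`E|∇f|²` and `E|E[∇f | X₁]|²`, the latter controlled by the ANOVA decomposition of
`∇f(X₁ + X₂)`. After rescaling, for every locally Lipschitz `f`,
`4 Var f ≤ C (3 E|∇f|² + |E∇f|²)` under `ν₂`. The slices may be differentiable where `f` is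
not, by cancellation; this happens with positive probability for at most countably many `c`, so one
argues for the other `c` and lets `c → 1`.

Testing the Poincaré inequality of `ν₂`, with its optimal constant `B`, against `f + t ⟪a, ·⟫`
shows that `B |E∇f|²` is at most `σ² E|∇f|²`, up to an error controlled by the deficit
`B E|∇f|² - Var f`. Combining both bounds gives `4 B² ≤ C (3 B + σ²)`.
-/

section SquareIntegrable

theorem covariance_sq_le_variance_mul_variance {Ω : Type*} [MeasurableSpace Ω]
    {μ : Measure Ω} [IsFiniteMeasure μ] {Y Z : Ω → ℝ} (hY : MemLp Y 2 μ) (hZ : MemLp Z 2 μ) :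
    cov[Y, Z; μ] ^ 2 ≤ Var[Y; μ] * Var[Z; μ] := by
  have h (t : ℝ) : 0 ≤ Var[Z; μ] * (t * t) + 2 * cov[Y, Z; μ] * t + Var[Y; μ] := by
    have h0 := variance_nonneg (Y + t • Z) μ
    rw [variance_add hY (hZ.const_smul t), variance_smul, covariance_smul_right] at h0
    linarith
  have := discrim_le_zero h
  rw [discrim] at this
  linarith

theorem lintegral_enorm_sq_eq_ofReal {X H : Type*} [MeasurableSpace X] {μ : Measure X}
    [NormedAddCommGroup H] {g : X → H} (hg : MemLp g 2 μ) :
    ∫⁻ x, ‖g x‖ₑ ^ 2 ∂μ = ENNReal.ofReal (∫ x, ‖g x‖ ^ 2 ∂μ) := by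
  rw [ofReal_integral_eq_lintegral_ofReal hg.norm.integrable_sq (ae_of_all _ fun _ => sq_nonneg _)]
  simp [ENNReal.ofReal_pow]

theorem memLp_two_of_lintegral_enorm_sq_ne_top {X H : Type*} [MeasurableSpace X] {μ : Measure X}
    [NormedAddCommGroup H] {g : X → H} (hg : AEStronglyMeasurable g μ)
    (h : ∫⁻ x, ‖g x‖ₑ ^ 2 ∂μ ≠ ∞) : MemLp g 2 μ := by
  refine ⟨hg, ?_⟩
  rw [eLpNorm_lt_top_iff_lintegral_rpow_enorm_lt_top two_ne_zero ofNat_ne_top]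
  simpa using h.lt_top

theorem integral_norm_sq_add_smul_const {X H : Type*} [MeasurableSpace X] {μ : Measure X}
    [IsProbabilityMeasure μ] [NormedAddCommGroup H] [InnerProductSpace ℝ H] [CompleteSpace H]
    {g : X → H} (hg : MemLp g 2 μ) (a : H) (t : ℝ) :
    ∫ x, ‖g x + t • a‖ ^ 2 ∂μ =
      ∫ x, ‖g x‖ ^ 2 ∂μ + 2 * t * ⟪∫ x, g x ∂μ, a⟫ + t ^ 2 * ‖a‖ ^ 2 := by
  have hg1 : Integrable g μ := hg.integrable one_le_two
  have hsq := hg.norm.integrable_sq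
  simp only [norm_add_sq_real, inner_smul_right, real_inner_comm a, norm_smul, mul_pow,
    Real.norm_eq_abs, sq_abs]
  rw [integral_add (by fun_prop) (by fun_prop), integral_add (by fun_prop) (by fun_prop),
    integral_const_mul, integral_const_mul, integral_inner hg1, integral_const]
  simp only [probReal_univ, one_smul]
  ring

theorem ae_prod_and {Y : Type*} [MeasurableSpace Y] {ν : Measure Y} [SFinite ν]
    {p : Y → Prop} (h : ∀ᵐ y ∂ν, p y) : ∀ᵐ q ∂(ν.prod ν), p q.1 ∧ p q.2 :=
  (Measure.quasiMeasurePreserving_fst.ae h).and (Measure.quasiMeasurePreserving_snd.ae h)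

variable {X Y H : Type*} [MeasurableSpace X] [MeasurableSpace Y] {μ : Measure X} {ν : Measure Y}
  [IsProbabilityMeasure ν] [NormedAddCommGroup H]

theorem norm_integral_sq_le_integral_norm_sq [NormedSpace ℝ H] {g : Y → H} (hg : MemLp g 2 ν) :
    ‖∫ y, g y ∂ν‖ ^ 2 ≤ ∫ y, ‖g y‖ ^ 2 ∂ν := by
  have hvar := variance_nonneg (fun y => ‖g y‖) ν
  simp only [variance_eq_sub hg.norm, Pi.pow_apply, sub_nonneg] at hvar
  exact (pow_le_pow_left₀ (norm_nonneg _) (norm_integral_le_integral_norm g) 2).trans hvar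

theorem integrable_inner_of_memLp_two [InnerProductSpace ℝ H] {f g : X → H} (hf : MemLp f 2 μ)
    (hg : MemLp g 2 μ) : Integrable (fun x => ⟪f x, g x⟫) μ :=
  (hf.norm.integrable_mul hg.norm).mono' (hf.1.inner hg.1)
    (ae_of_all _ fun _ => norm_inner_le_norm _ _)

theorem ae_memLp_two_prodMk_left [SFinite μ] {K : X × Y → H} (hK : MemLp K 2 (μ.prod ν)) :
    ∀ᵐ x ∂μ, MemLp (fun y => K (x, y)) 2 ν := by
  filter_upwards [hK.1.prodMk_left, hK.norm.integrable_sq.prod_right_ae] with x hx hx2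
  exact (memLp_two_iff_integrable_sq_norm hx).2 hx2

theorem memLp_two_integral_prod_left [SFinite μ] [NormedSpace ℝ H] {K : X × Y → H}
    (hK : MemLp K 2 (μ.prod ν)) : MemLp (fun x => ∫ y, K (x, y) ∂ν) 2 μ := by
  have hmeas := hK.1.integral_prod_right'
  refine (memLp_two_iff_integrable_sq_norm hmeas).2
    (hK.norm.integrable_sq.integral_prod_left.mono' (hmeas.norm.pow 2) ?_)
  filter_upwards [ae_memLp_two_prodMk_left hK] with x hx
  simpa using norm_integral_sq_le_integral_norm_sq hx

theorem memLp_two_swap [SFinite μ] {K : X × Y → H} (hK : MemLp K 2 (μ.prod ν)) :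
    MemLp (fun z : Y × X => K z.swap) 2 (ν.prod μ) :=
  hK.comp_measurePreserving Measure.measurePreserving_swap

theorem ae_memLp_two_prodMk_right [IsProbabilityMeasure μ] {K : X × Y → H}
    (hK : MemLp K 2 (μ.prod ν)) : ∀ᵐ y ∂ν, MemLp (fun x => K (x, y)) 2 μ :=
  ae_memLp_two_prodMk_left (memLp_two_swap hK)

theorem memLp_two_integral_prod_right [IsProbabilityMeasure μ] [NormedSpace ℝ H] {K : X × Y → H}
    (hK : MemLp K 2 (μ.prod ν)) : MemLp (fun y => ∫ x, K (x, y) ∂μ) 2 ν :=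
  memLp_two_integral_prod_left (memLp_two_swap hK)

theorem ae_memLp_two_add_smul [IsProbabilityMeasure μ] [NormedSpace ℝ H] {K : X × Y → H}
    (hK : MemLp K 2 (μ.prod ν)) (c : ℝ) :
    ∀ᵐ q ∂(ν.prod ν), MemLp (fun x => K (x, q.1) + c • K (x, q.2)) 2 μ :=
  (ae_prod_and (ae_memLp_two_prodMk_right hK)).mono fun _ h => h.1.add (h.2.const_smul c)

theorem ae_integral_add_smul [IsProbabilityMeasure μ] [NormedSpace ℝ H] {K : X × Y → H}
    (hK : MemLp K 2 (μ.prod ν)) (c : ℝ) :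
    ∀ᵐ q ∂(ν.prod ν), ∫ x, (K (x, q.1) + c • K (x, q.2)) ∂μ =
      ∫ x, K (x, q.1) ∂μ + c • ∫ x, K (x, q.2) ∂μ := by
  filter_upwards [ae_prod_and (ae_memLp_two_prodMk_right hK)] with q h
  rw [integral_add (h.1.integrable one_le_two) ((h.2.integrable one_le_two).fun_smul c),
    integral_smul]

theorem integrable_norm_sq_add_smul [SFinite μ] [NormedSpace ℝ H] {K : X × Y → H}
    (hK : MemLp K 2 (μ.prod ν)) (c : ℝ) :
    Integrable (fun w : X × Y × Y => ‖K (w.1, w.2.1) + c • K (w.1, w.2.2)‖ ^ 2)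
      (μ.prod (ν.prod ν)) := by
  have h₁ := hK.comp_measurePreserving
    ((MeasurePreserving.id μ).prod (measurePreserving_fst (μ := ν) (ν := ν)))
  have h₂ := hK.comp_measurePreserving
    ((MeasurePreserving.id μ).prod (measurePreserving_snd (μ := ν) (ν := ν)))
  exact (h₁.add (h₂.const_smul c)).norm.integrable_sq

variable [InnerProductSpace ℝ H] [CompleteSpace H]

theorem integral_norm_sq_add_smul {g : Y → H} (hg : MemLp g 2 ν) (c : ℝ) :
    ∫ q, ‖g q.1 + c • g q.2‖ ^ 2 ∂(ν.prod ν) =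
      (1 + c ^ 2) * ∫ y, ‖g y‖ ^ 2 ∂ν + 2 * c * ‖∫ y, g y ∂ν‖ ^ 2 := by
  have h₁ : MemLp (fun q : Y × Y => g q.1) 2 (ν.prod ν) :=
    hg.comp_measurePreserving measurePreserving_fst
  have h₂ : MemLp (fun q : Y × Y => g q.2) 2 (ν.prod ν) :=
    hg.comp_measurePreserving measurePreserving_snd
  have hcross : ∫ q, ⟪g q.1, g q.2⟫ ∂(ν.prod ν) = ‖∫ y, g y ∂ν‖ ^ 2 := by
    have hi := hg.integrable one_le_two
    rw [← real_inner_self_eq_norm_sq]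
    exact integral_prod_bilin (innerSL ℝ) hi hi
  have hi₁ := h₁.norm.integrable_sq
  have hi₂ := h₂.norm.integrable_sq
  have hi₁₂ := integrable_inner_of_memLp_two h₁ h₂
  simp only [norm_add_sq_real, inner_smul_right, norm_smul, mul_pow, Real.norm_eq_abs, sq_abs]
  rw [integral_add (by fun_prop) (by fun_prop), integral_add (by fun_prop) (by fun_prop),
    integral_const_mul, integral_const_mul, integral_const_mul, hcross,
    integral_fun_fst (fun y => ‖g y‖ ^ 2), integral_fun_snd (fun y => ‖g y‖ ^ 2)]
  simp only [probReal_univ, one_smul]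
  ring

theorem integral_integral_norm_sq_add_smul [SFinite μ] {K : X × Y → H}
    (hK : MemLp K 2 (μ.prod ν)) (c : ℝ) :
    ∫ q, ∫ x, ‖K (x, q.1) + c • K (x, q.2)‖ ^ 2 ∂μ ∂(ν.prod ν) =
      (1 + c ^ 2) * ∫ z, ‖K z‖ ^ 2 ∂(μ.prod ν) + 2 * c * ∫ x, ‖∫ y, K (x, y) ∂ν‖ ^ 2 ∂μ := by
  have hsq := hK.norm.integrable_sq
  calc ∫ q, ∫ x, ‖K (x, q.1) + c • K (x, q.2)‖ ^ 2 ∂μ ∂(ν.prod ν)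
      = ∫ x, ∫ q, ‖K (x, q.1) + c • K (x, q.2)‖ ^ 2 ∂(ν.prod ν) ∂μ :=
        (integral_integral_swap (integrable_norm_sq_add_smul hK c)).symm
    _ = ∫ x, ((1 + c ^ 2) * ∫ y, ‖K (x, y)‖ ^ 2 ∂ν + 2 * c * ‖∫ y, K (x, y) ∂ν‖ ^ 2) ∂μ :=
        integral_congr_ae ((ae_memLp_two_prodMk_left hK).mono fun x hx =>
          integral_norm_sq_add_smul hx c)
    _ = _ := by
        rw [integral_add (hsq.integral_prod_left.const_mul _)
          ((memLp_two_integral_prod_left hK).norm.integrable_sq.const_mul _),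
          integral_const_mul, integral_const_mul, ← integral_prod _ hsq]

-- The squared norm of the interaction term in the ANOVA decomposition of `K` is nonnegative.
theorem integral_norm_sq_integral_add_le [IsProbabilityMeasure μ] {K : X × Y → H}
    (hK : MemLp K 2 (μ.prod ν)) :
    ∫ x, ‖∫ y, K (x, y) ∂ν‖ ^ 2 ∂μ + ∫ y, ‖∫ x, K (x, y) ∂μ‖ ^ 2 ∂ν ≤
      ∫ z, ‖K z‖ ^ 2 ∂(μ.prod ν) + ‖∫ z, K z ∂(μ.prod ν)‖ ^ 2 := by
  have hb := memLp_two_integral_prod_right hK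
  have hjensen : ∫ q, ‖∫ x, K (x, q.1) ∂μ + (-1 : ℝ) • ∫ x, K (x, q.2) ∂μ‖ ^ 2 ∂(ν.prod ν) ≤
      ∫ q, ∫ x, ‖K (x, q.1) + (-1 : ℝ) • K (x, q.2)‖ ^ 2 ∂μ ∂(ν.prod ν) := by
    refine integral_mono_of_nonneg (ae_of_all _ fun _ => sq_nonneg _)
      (integrable_norm_sq_add_smul hK (-1)).integral_prod_right ?_
    filter_upwards [ae_memLp_two_add_smul hK (-1), ae_integral_add_smul hK (-1)] with q hq hint
    rw [← hint]
    exact norm_integral_sq_le_integral_norm_sq hq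
  rw [integral_norm_sq_add_smul hb, integral_integral_norm_sq_add_smul hK,
    ← integral_prod_symm _ (hK.integrable one_le_two)] at hjensen
  linarith

theorem integral_variance_add_mul [IsProbabilityMeasure μ] {K : X × Y → ℝ}
    (hK : MemLp K 2 (μ.prod ν)) (c : ℝ) :
    ∫ q, Var[fun x => K (x, q.1) + c * K (x, q.2); μ] ∂(ν.prod ν) =
      (1 + c ^ 2) * (∫ z, ‖K z‖ ^ 2 ∂(μ.prod ν) - ∫ y, ‖∫ x, K (x, y) ∂μ‖ ^ 2 ∂ν) +
        2 * c * (∫ x, ‖∫ y, K (x, y) ∂ν‖ ^ 2 ∂μ - ‖∫ z, K z ∂(μ.prod ν)‖ ^ 2) := by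
  have hb := memLp_two_integral_prod_right hK
  have hbsq : Integrable (fun q : Y × Y => ‖∫ x, K (x, q.1) ∂μ + c • ∫ x, K (x, q.2) ∂μ‖ ^ 2)
      (ν.prod ν) :=
    ((hb.comp_measurePreserving measurePreserving_fst).add
      ((hb.comp_measurePreserving measurePreserving_snd).const_smul c)).norm.integrable_sq
  calc ∫ q, Var[fun x => K (x, q.1) + c * K (x, q.2); μ] ∂(ν.prod ν)
      = ∫ q, (∫ x, ‖K (x, q.1) + c • K (x, q.2)‖ ^ 2 ∂μ -
          ‖∫ x, K (x, q.1) ∂μ + c • ∫ x, K (x, q.2) ∂μ‖ ^ 2) ∂(ν.prod ν) := by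
        refine integral_congr_ae ?_
        filter_upwards [ae_memLp_two_add_smul hK c, ae_integral_add_smul hK c] with q hq hint
        simp only [← hint, Real.norm_eq_abs, sq_abs]
        exact variance_eq_sub hq
    _ = _ := by
        rw [integral_sub (integrable_norm_sq_add_smul hK c).integral_prod_right hbsq,
          integral_integral_norm_sq_add_smul hK, integral_norm_sq_add_smul hb,
          ← integral_prod_symm _ (hK.integrable one_le_two)]
        ring

theorem memLp_two_prod_of_variance_le [IsProbabilityMeasure μ] {K : X × Y → ℝ}
    (hK : AEStronglyMeasurable K (μ.prod ν)) {g : Y → ℝ} (hg : Integrable g ν)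
    (hX : ∀ᵐ y ∂ν, MemLp (fun x => K (x, y)) 2 μ ∧ Var[fun x => K (x, y); μ] ≤ g y)
    (hY : ∀ᵐ x ∂μ, MemLp (fun y => K (x, y)) 2 ν) : MemLp K 2 (μ.prod ν) := by
  set m : Y → ℝ := fun y => ∫ x, K (x, y) ∂μ
  have hm : AEStronglyMeasurable m ν := hK.prod_swap.integral_prod_right'
  have hDmeas : AEStronglyMeasurable (fun z => K z - m z.2) (μ.prod ν) := hK.sub hm.comp_snd
  have hD : MemLp (fun z => K z - m z.2) 2 (μ.prod ν) := by
    have hDsq : AEStronglyMeasurable (fun z => (K z - m z.2) ^ 2) (μ.prod ν) := hDmeas.pow 2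
    rw [memLp_two_iff_integrable_sq hDmeas, integrable_prod_iff' hDsq]
    refine ⟨hX.mono fun y hy => (hy.1.sub (memLp_const (m y))).integrable_sq,
      hg.mono' hDsq.norm.prod_swap.integral_prod_right' ?_⟩
    filter_upwards [hX] with y hy
    have hnonneg : 0 ≤ ∫ x, (K (x, y) - m y) ^ 2 ∂μ := integral_nonneg fun _ => sq_nonneg _
    simpa [variance_eq_integral hy.1.aemeasurable, abs_of_nonneg hnonneg] using hy.2
  have hmL2 : MemLp m 2 ν := by
    obtain ⟨x, hKx, hDx⟩ := (hY.and (ae_memLp_two_prodMk_left hD)).exists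
    simpa [Pi.sub_def] using hKx.sub hDx
  simpa [Pi.add_def] using hD.add (hmL2.comp_measurePreserving measurePreserving_snd)

end SquareIntegrable

section LocallyLipschitz

theorem locallyLipschitz_add_const_mul {E : Type*} [PseudoEMetricSpace E] {f g : E → ℝ}
    (hf : LocallyLipschitz f) (hg : LocallyLipschitz g) (c : ℝ) :
    LocallyLipschitz (fun x => f x + c * g x) :=
  hf.add ((lipschitzWith_smul c).locallyLipschitz.comp hg)

theorem locallyLipschitz_comp_add_right {E : Type*} [SeminormedAddCommGroup E] {f : E → ℝ}
    (hf : LocallyLipschitz f) (a : E) : LocallyLipschitz (fun x => f (x + a)) :=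
  hf.comp (isometry_add_right a).lipschitz.locallyLipschitz

theorem locallyLipschitz_comp_smul {E : Type*} [SeminormedAddCommGroup E] [NormedSpace ℝ E]
    {f : E → ℝ} (hf : LocallyLipschitz f) (c : ℝ) : LocallyLipschitz (fun x => f (c • x)) :=
  hf.comp (lipschitzWith_smul c).locallyLipschitz

end LocallyLipschitz

section Gradient

variable {E : Type*} [NormedAddCommGroup E] [InnerProductSpace ℝ E] [CompleteSpace E]

theorem gradient_comp_add_right (f : E → ℝ) (a x : E) :
    gradient (fun z => f (z + a)) x = gradient f (x + a) := by
  simp [gradient, fderiv_comp_add_right]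

theorem gradient_comp_smul (f : E → ℝ) (c : ℝ) (x : E) :
    gradient (fun z => f (c • z)) x = c • gradient f (c • x) := by
  simp [gradient, fderiv_comp_smul]

theorem memLp_gradient_comp_smul [MeasurableSpace E] {μ ν : Measure E} {c : ℝ} {p : ℝ≥0∞}
    {f : E → ℝ} (hc : MeasurePreserving (fun x => c • x) μ ν) (hf : MemLp (gradient f) p ν) :
    MemLp (gradient fun x => f (c • x)) p μ := by
  rw [funext (gradient_comp_smul f c)]
  exact (hf.comp_measurePreserving hc).const_smul c

theorem gradient_const_mul (f : E → ℝ) (c : ℝ) (x : E) :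
    gradient (fun z => c * f z) x = c • gradient f x := by
  have hsmul := congrFun (fderiv_const_smul_field (𝕜 := ℝ) (f := f) c) x
  simp_all [gradient, Pi.smul_def]

theorem hasGradientAt_inner_right (a x : E) : HasGradientAt (fun z => ⟪a, z⟫) a x :=
  hasGradientAt_iff_hasFDerivAt.2 (InnerProductSpace.toDual ℝ E a).hasFDerivAt

theorem gradient_inner_right (a : E) : gradient (fun x => ⟪a, x⟫) = fun _ => a :=
  gradient_eq (hasGradientAt_inner_right a)

theorem locallyLipschitz_inner_right (a : E) : LocallyLipschitz (fun x => ⟪a, x⟫) :=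
  (InnerProductSpace.toDual ℝ E a).lipschitz.locallyLipschitz

-- Where the combination is not differentiable its `gradient` is the junk value `0`.
theorem norm_gradient_add_const_mul_le {f g : E → ℝ} {c : ℝ} {x : E}
    (h : DifferentiableAt ℝ (fun z => f z + c * g z) x → DifferentiableAt ℝ f x) :
    ‖gradient (fun z => f z + c * g z) x‖ ≤ ‖gradient f x + c • gradient g x‖ := by
  by_cases hfg : DifferentiableAt ℝ (fun z => f z + c * g z) x
  · have hg : DifferentiableAt ℝ (fun z => c * g z) x := by simpa using hfg.fun_sub (h hfg)
    rw [← gradient_const_mul, gradient, fderiv_fun_add (h hfg) hg, map_add]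
    rfl
  · simp [gradient_eq_zero_of_not_differentiableAt hfg]

end Gradient

section GradientMeasurable

variable {E : Type*} [NormedAddCommGroup E] [InnerProductSpace ℝ E] [FiniteDimensional ℝ E]
  [MeasurableSpace E] [BorelSpace E]

theorem measurable_gradient (f : E → ℝ) : Measurable (gradient f) :=
  (InnerProductSpace.toDual ℝ E).symm.continuous.measurable.comp (measurable_fderiv ℝ f)

theorem countable_setOf_not_ae_norm_gradient_add_const_mul_le {Q : Type*} [TopologicalSpace Q]
    [MeasurableSpace Q] [OpensMeasurableSpace Q] (π : Measure (Q × E)) [SFinite π]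
    {F G : Q → E → ℝ} (hF : Continuous F.uncurry) (hG : Continuous G.uncurry) :
    {c : ℝ | ¬ ∀ᵐ w ∂π, ‖gradient (fun x => F w.1 x + c * G w.1 x) w.2‖ ≤
      ‖gradient (F w.1) w.2 + c • gradient (G w.1) w.2‖}.Countable := by
  let A : ℝ → Set (Q × E) := fun c =>
    {w | DifferentiableAt ℝ (fun x => F w.1 x + c * G w.1 x) w.2 ∧
      ¬ DifferentiableAt ℝ (F w.1) w.2}
  have hA_meas (c : ℝ) : MeasurableSet (A c) :=
    (measurableSet_of_differentiableAt_with_param ℝ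
      (f := fun q x => F q x + c * G q x) (hF.add (continuous_const.mul hG))).inter
      (measurableSet_of_differentiableAt_with_param ℝ hF).compl
  -- If two different combinations are differentiable at a point, then so is `F`.
  have hA_disj : Pairwise (Function.onFun Disjoint A) := by
    refine fun c c' hcc => Set.disjoint_left.2 fun w hw hw' => hw.2 ?_
    have hne : c' - c ≠ 0 := sub_ne_zero.2 hcc.symm
    have hF_eq : F w.1 = fun x => (c' - c)⁻¹ *
        (c' * (F w.1 x + c * G w.1 x) - c * (F w.1 x + c' * G w.1 x)) := by
      ext x
      field_simp
      ring
    rw [hF_eq]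
    exact ((hw.1.const_mul c').fun_sub (hw'.1.const_mul c)).const_mul (c' - c)⁻¹
  refine (Measure.countable_meas_pos_of_disjoint_iUnion (μ := π) hA_meas hA_disj).mono
    fun c hc => (pos_iff_ne_zero.2 fun h0 => hc ?_ : 0 < π (A c))
  filter_upwards [measure_eq_zero_iff_ae_notMem.1 h0] with w hw
  exact norm_gradient_add_const_mul_le fun h => not_not.1 fun hF => hw ⟨h, hF⟩

end GradientMeasurable

section StandardizedSum

variable {M : Type*} [MeasurableSpace M]

theorem measurePreserving_add_conv [AddMonoid M] [MeasurableAdd₂ M] (μ ν : Measure M) :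
    MeasurePreserving (fun z : M × M => z.1 + z.2) (μ.prod ν) (μ ∗ ν) :=
  ⟨measurable_add, rfl⟩

variable [AddCommMonoid M]

theorem integral_norm_sq_integral_add_comm {H : Type*} [NormedAddCommGroup H] [NormedSpace ℝ H]
    {μ : Measure M} (g : M → H) :
    ∫ y, ‖∫ x, g (x + y) ∂μ‖ ^ 2 ∂μ = ∫ x, ‖∫ y, g (x + y) ∂μ‖ ^ 2 ∂μ := by
  congr with x
  simp only [add_comm _ x]

variable [Module ℝ M]

/-- The law of `(X₁ + X₂)/√2` for independent `X₁`, `X₂` with law `μ`. -/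
noncomputable def standardizedSum (μ : Measure M) : Measure M :=
  (μ ∗ μ).map fun x => (√2)⁻¹ • x

variable [MeasurableConstSMul ℝ M]

theorem measurePreserving_smul_standardizedSum (μ : Measure M) :
    MeasurePreserving (fun x => (√2)⁻¹ • x) (μ ∗ μ) (standardizedSum μ) :=
  ⟨measurable_const_smul _, rfl⟩

instance isProbabilityMeasure_standardizedSum [MeasurableAdd₂ M] (μ : Measure M)
    [IsProbabilityMeasure μ] : IsProbabilityMeasure (standardizedSum μ) :=
  Measure.isProbabilityMeasure_map (measurePreserving_smul_standardizedSum μ).aemeasurable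

end StandardizedSum

/-- The Poincaré inequality with a real constant `C`, for functions with square-integrable gradient.
Square integrability of `f` is part of the conclusion, so that `Var[f; μ]` is not a junk value. -/
def PoincareInequality {E : Type*} [NormedAddCommGroup E] [InnerProductSpace ℝ E]
    [CompleteSpace E] [MeasurableSpace E] (μ : Measure E) (C : ℝ) : Prop :=
  ∀ f : E → ℝ, LocallyLipschitz f → MemLp (gradient f) 2 μ →
    MemLp f 2 μ ∧ Var[f; μ] ≤ C * ∫ x, ‖gradient f x‖ ^ 2 ∂μ

namespace PoincareInequality

section Linear

variable {E : Type*} [NormedAddCommGroup E] [InnerProductSpace ℝ E] [CompleteSpace E]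
  [MeasurableSpace E] {μ : Measure E} [IsProbabilityMeasure μ] {C : ℝ}

theorem memLp_two_inner_right (h : PoincareInequality μ C) (a : E) : MemLp (fun x => ⟪a, x⟫) 2 μ :=
  (h _ (locallyLipschitz_inner_right a) (gradient_inner_right a ▸ memLp_const a)).1

theorem variance_inner_right_le (h : PoincareInequality μ C) (a : E) :
    Var[fun x => ⟪a, x⟫; μ] ≤ C * ‖a‖ ^ 2 := by
  simpa [gradient_inner_right] using
    (h _ (locallyLipschitz_inner_right a) (gradient_inner_right a ▸ memLp_const a)).2

end Linear

variable {E : Type*} [NormedAddCommGroup E] [InnerProductSpace ℝ E] [FiniteDimensional ℝ E]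
  [MeasurableSpace E] [BorelSpace E] {μ ν : Measure E} {A B C D σ : ℝ} {f : E → ℝ}

theorem variance_le_of_norm_gradient_le {F : Type*} [NormedAddCommGroup F]
    (h : PoincareInequality μ C) (hC : 0 ≤ C) (hf : LocallyLipschitz f) {U : E → F}
    (hU : MemLp U 2 μ) (hle : ∀ᵐ x ∂μ, ‖gradient f x‖ ≤ ‖U x‖) :
    Var[f; μ] ≤ C * ∫ x, ‖U x‖ ^ 2 ∂μ := by
  have hgrad : MemLp (gradient f) 2 μ := hU.mono (measurable_gradient f).aestronglyMeasurable hle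
  refine (h f hf hgrad).2.trans (mul_le_mul_of_nonneg_left ?_ hC)
  exact integral_mono_ae hgrad.norm.integrable_sq hU.norm.integrable_sq
    (hle.mono fun x hx => pow_le_pow_left₀ (norm_nonneg _) hx 2)

variable [IsProbabilityMeasure μ]

section Convolution

variable [IsProbabilityMeasure ν]

theorem memLp_two_conv (hμ : PoincareInequality μ C) (hν : PoincareInequality ν D)
    (hf : LocallyLipschitz f) (hgrad : MemLp (gradient f) 2 (μ ∗ ν)) : MemLp f 2 (μ ∗ ν) := by
  have hadd := measurePreserving_add_conv μ ν
  have hU : MemLp (fun z : E × E => gradient f (z.1 + z.2)) 2 (μ.prod ν) :=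
    hgrad.comp_measurePreserving hadd
  have hslice (y : E) := locallyLipschitz_comp_add_right hf y
  have hgslice (y : E) : gradient (fun x => f (x + y)) = fun x => gradient f (x + y) :=
    funext (gradient_comp_add_right f y)
  have hK : AEStronglyMeasurable (fun z : E × E => f (z.1 + z.2)) (μ.prod ν) :=
    (hf.continuous.comp continuous_add).aestronglyMeasurable
  refine (memLp_map_measure_iff hf.continuous.aestronglyMeasurable hadd.aemeasurable).2
    (memLp_two_prod_of_variance_le (K := fun z : E × E => f (z.1 + z.2)) hK
      (hU.norm.integrable_sq.integral_prod_right.const_mul C) ?_ ?_)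
  · filter_upwards [ae_memLp_two_prodMk_right hU] with y hy
    simpa only [hgslice] using hμ _ (hslice y) ((hgslice y).symm ▸ hy)
  · filter_upwards [ae_memLp_two_prodMk_left hU] with x hx
    simp only [add_comm x] at hx ⊢
    exact (hν _ (hslice x) ((hgslice x).symm ▸ hx)).1

theorem ae_variance_slice_le (h : PoincareInequality μ C) (hC : 0 ≤ C) (hf : LocallyLipschitz f)
    (hU : MemLp (fun z : E × E => gradient f (z.1 + z.2)) 2 (μ.prod ν)) {c : ℝ}
    (hc : ∀ᵐ w ∂((ν.prod ν).prod μ), ‖gradient (fun x => f (x + w.1.1) + c * f (x + w.1.2)) w.2‖ ≤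
      ‖gradient (fun x => f (x + w.1.1)) w.2 + c • gradient (fun x => f (x + w.1.2)) w.2‖) :
    ∀ᵐ q ∂(ν.prod ν), Var[fun x => f (x + q.1) + c * f (x + q.2); μ] ≤
      C * ∫ x, ‖gradient f (x + q.1) + c • gradient f (x + q.2)‖ ^ 2 ∂μ := by
  filter_upwards [Measure.ae_ae_of_ae_prod hc, ae_memLp_two_add_smul hU c] with q hq hUq
  refine h.variance_le_of_norm_gradient_le hC (locallyLipschitz_add_const_mul
    (locallyLipschitz_comp_add_right hf q.1) (locallyLipschitz_comp_add_right hf q.2) c) hUq ?_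
  simpa only [gradient_comp_add_right] using hq

theorem integral_variance_slice_le (h : PoincareInequality μ C) (hC : 0 ≤ C)
    (hf : LocallyLipschitz f) (hK : MemLp (fun z : E × E => f (z.1 + z.2)) 2 (μ.prod ν))
    (hU : MemLp (fun z : E × E => gradient f (z.1 + z.2)) 2 (μ.prod ν)) (c : ℝ) :
    ∫ q, Var[fun x => f (x + q.1) + c * f (x + q.2); μ] ∂(ν.prod ν) ≤
      C * ∫ q, ∫ x, ‖gradient f (x + q.1) + c • gradient f (x + q.2)‖ ^ 2 ∂μ ∂(ν.prod ν) := by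
  have hfc := hf.continuous
  refine ((countable_setOf_not_ae_norm_gradient_add_const_mul_le ((ν.prod ν).prod μ)
    (F := fun q x => f (x + q.1)) (G := fun q x => f (x + q.2)) (by fun_prop)
    (by fun_prop)).dense_compl ℝ).induction ?_ ?_ c
  · intro c hc
    rw [← integral_const_mul]
    exact integral_mono_of_nonneg (ae_of_all _ fun _ => variance_nonneg _ _)
      ((integrable_norm_sq_add_smul hU c).integral_prod_right.const_mul C)
      (h.ae_variance_slice_le hC hf hU (not_not.1 hc))
  · simp only [integral_variance_add_mul hK, integral_integral_norm_sq_add_smul hU]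
    exact isClosed_le (by fun_prop) (by fun_prop)

end Convolution

theorem two_mul_variance_conv_self_le (h : PoincareInequality μ C) (hC : 0 ≤ C)
    (hf : LocallyLipschitz f) (hgrad : MemLp (gradient f) 2 (μ ∗ μ)) :
    2 * Var[f; μ ∗ μ] ≤ C * (3 * ∫ x, ‖gradient f x‖ ^ 2 ∂(μ ∗ μ) +
      ‖∫ x, gradient f x ∂(μ ∗ μ)‖ ^ 2) := by
  have hadd := measurePreserving_add_conv μ μ
  have hfL := h.memLp_two_conv h hf hgrad
  have hK : MemLp (fun z : E × E => f (z.1 + z.2)) 2 (μ.prod μ) := hfL.comp_measurePreserving hadd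
  have hU : MemLp (fun z : E × E => gradient f (z.1 + z.2)) 2 (μ.prod μ) :=
    hgrad.comp_measurePreserving hadd
  have hslice := h.integral_variance_slice_le hC hf hK hU 1
  rw [integral_variance_add_mul hK, integral_integral_norm_sq_add_smul hU] at hslice
  have hanova := integral_norm_sq_integral_add_le hU
  rw [← hadd.variance_fun_comp hf.continuous.aemeasurable, variance_eq_sub hK, Measure.conv,
    integral_map hadd.aemeasurable hgrad.norm.integrable_sq.1,
    integral_map hadd.aemeasurable hgrad.1]
  simp only [integral_norm_sq_integral_add_comm] at hslice hanova
  simp only [Real.norm_eq_abs, sq_abs, Pi.pow_apply] at hslice ⊢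
  linarith [mul_le_mul_of_nonneg_left hanova hC]

theorem memLp_two_standardizedSum (h : PoincareInequality μ C)
    (hf : LocallyLipschitz f) (hgrad : MemLp (gradient f) 2 (standardizedSum μ)) :
    MemLp f 2 (standardizedSum μ) :=
  (memLp_map_measure_iff hf.continuous.aestronglyMeasurable
    (measurePreserving_smul_standardizedSum μ).aemeasurable).2
    (h.memLp_two_conv h (locallyLipschitz_comp_smul hf _)
      (memLp_gradient_comp_smul (measurePreserving_smul_standardizedSum μ) hgrad))

theorem four_mul_variance_standardizedSum_le (h : PoincareInequality μ C)
    (hC : 0 ≤ C) {f : E → ℝ} (hf : LocallyLipschitz f)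
    (hgrad : MemLp (gradient f) 2 (standardizedSum μ)) :
    4 * Var[f; standardizedSum μ] ≤ C * (3 * ∫ x, ‖gradient f x‖ ^ 2 ∂standardizedSum μ +
      ‖∫ x, gradient f x ∂standardizedSum μ‖ ^ 2) := by
  have hmp := measurePreserving_smul_standardizedSum μ
  have hsq : (√2)⁻¹ ^ 2 = (2 : ℝ)⁻¹ := by rw [inv_pow, Real.sq_sqrt zero_le_two]
  have hvar := h.two_mul_variance_conv_self_le hC (locallyLipschitz_comp_smul hf (√2)⁻¹)
    (memLp_gradient_comp_smul hmp hgrad)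
  simp only [gradient_comp_smul, norm_smul, mul_pow, Real.norm_eq_abs, sq_abs, integral_const_mul,
    integral_smul, hsq, hmp.variance_fun_comp hf.continuous.aemeasurable] at hvar
  nth_rw 2 3 [standardizedSum]
  rw [integral_map hmp.aemeasurable hgrad.norm.integrable_sq.1,
    integral_map hmp.aemeasurable hgrad.1]
  linarith

theorem standardizedSum (h : PoincareInequality μ C) (hC : 0 ≤ C) :
    PoincareInequality (standardizedSum μ) C := by
  refine fun f hf hgrad => ⟨h.memLp_two_standardizedSum hf hgrad, ?_⟩
  linarith [h.four_mul_variance_standardizedSum_le hC hf hgrad,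
    mul_le_mul_of_nonneg_left (norm_integral_sq_le_integral_norm_sq hgrad) hC]

theorem sq_mul_inner_sub_covariance_le (h : PoincareInequality μ C) (hC : 0 ≤ C)
    (hf : LocallyLipschitz f) (hgrad : MemLp (gradient f) 2 μ) (a : E) :
    (C * ⟪∫ x, gradient f x ∂μ, a⟫ - cov[f, fun x => ⟪a, x⟫; μ]) ^ 2 ≤
      (C * ∫ x, ‖gradient f x‖ ^ 2 ∂μ - Var[f; μ]) * (C * ‖a‖ ^ 2 - Var[fun x => ⟪a, x⟫; μ]) := by
  have hfL := (h f hf hgrad).1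
  have haL := h.memLp_two_inner_right a
  have hdeficit (t : ℝ) : 0 ≤ (C * ‖a‖ ^ 2 - Var[fun x => ⟪a, x⟫; μ]) * (t * t) +
      2 * (C * ⟪∫ x, gradient f x ∂μ, a⟫ - cov[f, fun x => ⟪a, x⟫; μ]) * t +
      (C * ∫ x, ‖gradient f x‖ ^ 2 ∂μ - Var[f; μ]) := by
    have hle (x : E) : ‖gradient (fun z => f z + t * ⟪a, z⟫) x‖ ≤ ‖gradient f x + t • a‖ := by
      have ha := (hasGradientAt_inner_right a x).differentiableAt.const_mul t
      simpa [gradient_inner_right] using norm_gradient_add_const_mul_le (f := f)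
        (g := fun z => ⟪a, z⟫) (c := t) (x := x) fun hd => by simpa using hd.fun_sub ha
    have hvar := h.variance_le_of_norm_gradient_le hC
      (locallyLipschitz_add_const_mul hf (locallyLipschitz_inner_right a) t)
      (hgrad.add (memLp_const (t • a))) (ae_of_all _ hle)
    simp only [Pi.add_apply] at hvar
    rw [integral_norm_sq_add_smul_const hgrad, variance_fun_add hfL (haL.const_mul t),
      variance_const_mul, covariance_const_mul_right] at hvar
    linarith
  have := discrim_le_zero hdeficit
  rw [discrim] at this
  linarith

theorem mul_norm_integral_gradient_sq_le (h : PoincareInequality μ C) (hC : 0 ≤ C) {σ η : ℝ}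
    (hσ₀ : 0 ≤ σ) (hσ : ∀ a, Var[fun x => ⟪a, x⟫; μ] ≤ σ * ‖a‖ ^ 2) (hη : 0 < η)
    (hf : LocallyLipschitz f) (hgrad : MemLp (gradient f) 2 μ) :
    C * ‖∫ x, gradient f x ∂μ‖ ^ 2 ≤ (1 + η) * (σ * ∫ x, ‖gradient f x‖ ^ 2 ∂μ) +
      (1 + η⁻¹) * (C * ∫ x, ‖gradient f x‖ ^ 2 ∂μ - Var[f; μ]) := by
  set p := ∫ x, gradient f x ∂μ
  set I := ∫ x, ‖gradient f x‖ ^ 2 ∂μ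
  set κ := cov[f, fun x => ⟪p, x⟫; μ]
  obtain ⟨hfL, hvar⟩ := h f hf hgrad
  have hI : 0 ≤ I := integral_nonneg fun _ => sq_nonneg _
  have hdef : 0 ≤ C * I - Var[f; μ] := sub_nonneg.2 hvar
  have hcov : κ ^ 2 ≤ (C * I) * (σ * ‖p‖ ^ 2) :=
    (covariance_sq_le_variance_mul_variance hfL (h.memLp_two_inner_right p)).trans
      (mul_le_mul hvar (hσ p) (variance_nonneg _ _)
        (hdef.trans (by linarith [variance_nonneg f μ])))
  have hEL : (C * ‖p‖ ^ 2 - κ) ^ 2 ≤ (C * I - Var[f; μ]) * (C * ‖p‖ ^ 2) := by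
    rw [← real_inner_self_eq_norm_sq p]
    refine (h.sq_mul_inner_sub_covariance_le hC hf hgrad p).trans
      (mul_le_mul_of_nonneg_left ?_ hdef)
    rw [real_inner_self_eq_norm_sq]
    exact sub_le_self _ (variance_nonneg _ _)
  rcases (by positivity : 0 ≤ C * ‖p‖ ^ 2).eq_or_lt with h0 | hpos
  · rw [← h0]
    positivity
  refine le_of_mul_le_mul_left ?_ hpos
  calc C * ‖p‖ ^ 2 * (C * ‖p‖ ^ 2)
      = (κ + (C * ‖p‖ ^ 2 - κ)) ^ 2 := by ring
    _ ≤ (1 + η) * κ ^ 2 + (1 + η⁻¹) * (C * ‖p‖ ^ 2 - κ) ^ 2 := by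
        linarith [two_mul_le_add_mul_sq (a := κ) (b := C * ‖p‖ ^ 2 - κ) hη]
    _ ≤ (1 + η) * ((C * I) * (σ * ‖p‖ ^ 2)) +
          (1 + η⁻¹) * ((C * I - Var[f; μ]) * (C * ‖p‖ ^ 2)) := by gcongr
    _ = _ := by ring

theorem of_four_mul_variance_le (h : PoincareInequality μ B) (hB : 0 < B) (hA : 0 ≤ A)
    (hvar : ∀ f : E → ℝ, LocallyLipschitz f → MemLp (gradient f) 2 μ →
      4 * Var[f; μ] ≤ A * (3 * ∫ x, ‖gradient f x‖ ^ 2 ∂μ + ‖∫ x, gradient f x ∂μ‖ ^ 2))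
    (hσ₀ : 0 ≤ σ) (hσ : ∀ a, Var[fun x => ⟪a, x⟫; μ] ≤ σ * ‖a‖ ^ 2) {η : ℝ} (hη : 0 < η) :
    PoincareInequality μ
      (A * (3 * B + (1 + η) * σ + (1 + η⁻¹) * B) / (4 * B + A * (1 + η⁻¹))) := by
  refine fun f hf hgrad => ⟨(h f hf hgrad).1, ?_⟩
  rw [div_mul_eq_mul_div, le_div_iff₀ (by positivity)]
  have hmean := h.mul_norm_integral_gradient_sq_le hB.le hσ₀ hσ hη hf hgrad
  linarith [mul_le_mul_of_nonneg_left hmean hA, mul_le_mul_of_nonneg_left (hvar f hf hgrad) hB.le]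

theorem four_mul_sq_le_of_four_mul_variance_le
    (hB : IsLeast {C : ℝ | 0 ≤ C ∧ PoincareInequality μ C} B) (hA : 0 ≤ A)
    (hvar : ∀ f : E → ℝ, LocallyLipschitz f → MemLp (gradient f) 2 μ →
      4 * Var[f; μ] ≤ A * (3 * ∫ x, ‖gradient f x‖ ^ 2 ∂μ + ‖∫ x, gradient f x ∂μ‖ ^ 2))
    (hσ₀ : 0 ≤ σ) (hσ : ∀ a, Var[fun x => ⟪a, x⟫; μ] ≤ σ * ‖a‖ ^ 2) :
    4 * B ^ 2 ≤ A * (3 * B + σ) := by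
  obtain ⟨⟨hB₀, h⟩, hmin⟩ := hB
  rcases hB₀.eq_or_lt with rfl | hpos
  · simpa using mul_nonneg hA hσ₀
  have hη {η : ℝ} (hη : 0 < η) : 4 * B ^ 2 ≤ A * (3 * B + (1 + η) * σ) := by
    have hle := hmin ⟨by positivity, h.of_four_mul_variance_le hpos hA hvar hσ₀ hσ hη⟩
    rw [le_div_iff₀ (by positivity)] at hle
    linarith
  have hlim : Filter.Tendsto (fun η => A * (3 * B + (1 + η) * σ)) (nhdsWithin 0 (Set.Ioi 0))
      (nhds (A * (3 * B + σ))) :=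
    (Continuous.tendsto' (by fun_prop) _ _ (by simp)).mono_left nhdsWithin_le_nhds
  exact ge_of_tendsto hlim (Filter.eventually_of_mem self_mem_nhdsWithin fun _ => hη)

end PoincareInequality

section PoincareConst

variable {d : ℕ} {μ : Measure (EuclideanSpace ℝ (Fin d))}

theorem evariance_le_poincareConst_mul_lintegral (hp : poincareConst μ ≠ ∞)
    {f : EuclideanSpace ℝ (Fin d) → ℝ} (hf : LocallyLipschitz f)
    (hgrad : ∫⁻ x, ‖gradient f x‖ₑ ^ 2 ∂μ ≠ ∞) :
    eVar[f; μ] ≤ poincareConst μ * ∫⁻ x, ‖gradient f x‖ₑ ^ 2 ∂μ := by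
  rw [← ENNReal.div_le_iff_le_mul (.inr hp) (.inl hgrad)]
  exact le_sInf fun C hC => ENNReal.div_le_of_le_mul (hC f hf)

theorem poincareConst_le_ofReal_iff [IsProbabilityMeasure μ] {C : ℝ} (hC : 0 ≤ C) :
    poincareConst μ ≤ ENNReal.ofReal C ↔ PoincareInequality μ C := by
  constructor
  · intro h f hf hgrad
    have hp := ne_top_of_le_ne_top ofReal_ne_top h
    have hlint := lintegral_enorm_sq_eq_ofReal hgrad
    have hevar : eVar[f; μ] ≤ ENNReal.ofReal (C * ∫ x, ‖gradient f x‖ ^ 2 ∂μ) := by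
      rw [ENNReal.ofReal_mul hC, ← hlint]
      exact (evariance_le_poincareConst_mul_lintegral hp hf (hlint ▸ ofReal_ne_top)).trans
        (by gcongr)
    have hfL : MemLp f 2 μ :=
      (evariance_lt_top_iff_memLp hf.continuous.aestronglyMeasurable).1
        (hevar.trans_lt ofReal_lt_top)
    rw [← ofReal_variance hfL, ENNReal.ofReal_le_ofReal_iff (by positivity)] at hevar
    exact ⟨hfL, hevar⟩
  · refine fun h => le_of_forall_gt_imp_ge_of_dense fun C' hC' => sInf_le fun f hf => ?_
    change eVar[f; μ] ≤ C' * ∫⁻ x, ‖gradient f x‖ₑ ^ 2 ∂μ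
    by_cases hlint : ∫⁻ x, ‖gradient f x‖ₑ ^ 2 ∂μ = ∞
    · rw [hlint, ENNReal.mul_top hC'.ne_bot]
      exact le_top
    have hgrad := memLp_two_of_lintegral_enorm_sq_ne_top
      (measurable_gradient f).aestronglyMeasurable hlint
    obtain ⟨hfL, hvar⟩ := h f hf hgrad
    calc eVar[f; μ] = ENNReal.ofReal Var[f; μ] := (ofReal_variance hfL).symm
      _ ≤ ENNReal.ofReal (C * ∫ x, ‖gradient f x‖ ^ 2 ∂μ) := ofReal_le_ofReal hvar
      _ = ENNReal.ofReal C * ∫⁻ x, ‖gradient f x‖ₑ ^ 2 ∂μ := by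
        rw [ENNReal.ofReal_mul hC, lintegral_enorm_sq_eq_ofReal hgrad]
      _ ≤ C' * ∫⁻ x, ‖gradient f x‖ₑ ^ 2 ∂μ := by gcongr

theorem isLeast_poincareConst [IsProbabilityMeasure μ] (hp : poincareConst μ ≠ ∞) :
    IsLeast {C : ℝ | 0 ≤ C ∧ PoincareInequality μ C} (poincareConst μ).toReal := by
  refine ⟨⟨toReal_nonneg, ?_⟩, fun C hC => ?_⟩
  · rw [← poincareConst_le_ofReal_iff toReal_nonneg, ofReal_toReal hp]
  · exact toReal_le_of_le_ofReal hC.1 ((poincareConst_le_ofReal_iff hC.1).2 hC.2)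

theorem maxDirVar_nonneg (μ : Measure (EuclideanSpace ℝ (Fin d))) : 0 ≤ maxDirVar μ :=
  Real.iSup_nonneg fun _ => variance_nonneg _ _

theorem maxDirVar_le_poincareConst [IsProbabilityMeasure μ] (hp : poincareConst μ ≠ ∞) :
    maxDirVar μ ≤ (poincareConst μ).toReal :=
  Real.iSup_le (fun α => by
    simpa [α.2] using (isLeast_poincareConst hp).1.2.variance_inner_right_le α.1) toReal_nonneg

theorem variance_inner_le_maxDirVar [IsProbabilityMeasure μ] {C : ℝ}
    (h : PoincareInequality μ C) (a : EuclideanSpace ℝ (Fin d)) :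
    Var[fun x => ⟪a, x⟫; μ] ≤ maxDirVar μ * ‖a‖ ^ 2 := by
  rcases eq_or_ne a 0 with rfl | ha
  · simp [variance, evariance]
  have hbdd : BddAbove (Set.range fun α : {a : EuclideanSpace ℝ (Fin d) // ‖a‖ = 1} =>
      Var[fun x => ⟪(α : EuclideanSpace ℝ (Fin d)), x⟫; μ]) :=
    ⟨C, Set.forall_mem_range.2 fun α => by simpa [α.2] using h.variance_inner_right_le α.1⟩
  have hunit : ‖‖a‖⁻¹ • a‖ = 1 := norm_smul_inv_norm ha
  have hle := le_ciSup hbdd ⟨_, hunit⟩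
  simp only [real_inner_smul_left, variance_const_mul] at hle
  rw [inv_pow, inv_mul_le_iff₀ (by positivity), mul_comm] at hle
  exact hle

end PoincareConst

theorem sq_sub_div_sq_sub_add_mul_le {B v : ℝ} (hv : 0 ≤ v) (hvB : v ≤ B) :
    (B - v) ^ 2 / ((B - v) ^ 2 + B * v) ≤ 1 - v / B := by
  rcases (hv.trans hvB).eq_or_lt with rfl | hB
  · simp [le_antisymm hvB hv]
  rw [one_sub_div hB.ne', div_le_div_iff₀ (by nlinarith) hB]
  nlinarith [mul_nonneg (sub_nonneg.2 hvB) (sq_nonneg v)]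

theorem le_sub_mul_one_sub_div {A B v : ℝ} (hA : 0 ≤ A) (hB : 0 ≤ B)
    (h : 4 * B ^ 2 ≤ A * (3 * B + v)) : B ≤ A - A / 4 * (1 - v / B) := by
  rcases hB.eq_or_lt with rfl | hB
  · simp only [_root_.div_zero, _root_.sub_zero, mul_one]
    linarith
  rw [← mul_le_mul_iff_right₀ (by positivity : 0 < 4 * B)]
  field_simp
  linarith

theorem poincareConst_iid_stability_general {d : ℕ} (ν₁ : Measure (EuclideanSpace ℝ (Fin d)))
    [IsProbabilityMeasure ν₁] (hp : poincareConst ν₁ ≠ ⊤) :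
    poincareConst (standardizedSum ν₁) ≠ ⊤ ∧
      (poincareConst (standardizedSum ν₁)).toReal ≤
        (poincareConst ν₁).toReal - (poincareConst ν₁).toReal / 4 *
          (1 - maxDirVar (standardizedSum ν₁) / (poincareConst (standardizedSum ν₁)).toReal) := by
  obtain ⟨hA, hν₁⟩ := (isLeast_poincareConst hp).1
  have hν₂ := hν₁.standardizedSum hA
  have hp₂ : poincareConst (standardizedSum ν₁) ≠ ⊤ :=
    ne_top_of_le_ne_top ofReal_ne_top ((poincareConst_le_ofReal_iff hA).2 hν₂)
  refine ⟨hp₂, le_sub_mul_one_sub_div hA toReal_nonneg ?_⟩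
  exact PoincareInequality.four_mul_sq_le_of_four_mul_variance_le (isLeast_poincareConst hp₂) hA
    (fun f => hν₁.four_mul_variance_standardizedSum_le hA) (maxDirVar_nonneg _)
    (variance_inner_le_maxDirVar hν₂)

/-- **Stability of subadditivity for i.i.d. sums.** For `X₁, X₂` i.i.d. with law `ν₁` and `ν₂`
the law of `(X₁ + X₂)/√2`, with `σ² := σ²(ν₂)`,
`C_p(ν₂) ≤ C_p(ν₁) − (C_p(ν₁)/4) · (C_p(ν₂) − σ²)²/((C_p(ν₂) − σ²)² + C_p(ν₂)σ²)`. -/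
theorem poincareConst_iid_stability {d : ℕ} (ν₁ : Measure (EuclideanSpace ℝ (Fin d)))
    [IsProbabilityMeasure ν₁] (h2 : Integrable (fun x => ‖x‖ ^ 2) ν₁)
    (hp : poincareConst ν₁ ≠ ⊤)
    (ν₂ : Measure (EuclideanSpace ℝ (Fin d)))
    (hν₂ : ν₂ = Measure.map (fun x => (Real.sqrt 2)⁻¹ • x) (ν₁ ∗ ν₁)) :
    poincareConst ν₂ ≠ ⊤ ∧
      (poincareConst ν₂).toReal ≤
        (poincareConst ν₁).toReal -
          (poincareConst ν₁).toReal / 4 *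
            (((poincareConst ν₂).toReal - maxDirVar ν₂) ^ 2 /
              (((poincareConst ν₂).toReal - maxDirVar ν₂) ^ 2 +
                (poincareConst ν₂).toReal * maxDirVar ν₂)) := by
  obtain rfl : ν₂ = standardizedSum ν₁ := hν₂
  obtain ⟨hp₂, hle⟩ := poincareConst_iid_stability_general ν₁ hp
  exact ⟨hp₂, hle.trans (by
    gcongr
    exact sq_sub_div_sq_sub_add_mul_le (maxDirVar_nonneg _) (maxDirVar_le_poincareConst hp₂))⟩
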